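/- (Generator limit of the stable multiplier.) Let α ∈ (0,1), m₁, m₂ ∈ [0,∞) with m₁ + m₂ > 0, β ∈ ℝ. Then for all x, ξ ∈ ℝ, lim_{t→0⁺} (1/t)·(e^{iξx(e^{-t}-1)} ψ_α(ξ)/ψ_α(e^{-t}ξ) - 1) = -iξx + iξΓ_α + α ∫_ℝ (e^{iξu} - 1) ν_α(du). -/

import Mathlib

open MeasureTheory

/-- The α-stable Lévy measure on ℝ with density
`u ↦ m₁ u^(-α-1) 1_{(0,∞)}(u) + m₂ |u|^(-α-1) 1_{(-∞,0)}(u)` w.r.t. Lebesgue measure. -/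
noncomputable def nuStable (α m₁ m₂ : ℝ) : Measure ℝ :=
  (volume : Measure ℝ).withDensity fun u =>
    ENNReal.ofReal (if 0 < u then m₁ * u ^ (-α - 1) else if u < 0 then m₂ * |u| ^ (-α - 1) else 0)

/-- Location parameter `Γ_α = β - (m₁ - m₂) ∫₀^∞ u^{-α}(1+u²)^{-1} du` for `α ∈ (0,1)`. -/
noncomputable def Gamma01 (α m₁ m₂ β : ℝ) : ℝ :=
  β - (m₁ - m₂) * ∫ u in Set.Ioi (0 : ℝ), u ^ (-α) / (1 + u ^ 2)

/-- Characteristic function of the `α`-stable law, `α ∈ (0,1)`: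
`ψ_α(t) = exp(itΓ_α + ∫_ℝ (e^{itu} - 1) ν_α(du))`. -/
noncomputable def psi01 (α m₁ m₂ β : ℝ) (t : ℝ) : ℂ :=
  Complex.exp (Complex.I * t * (Gamma01 α m₁ m₂ β) +
    ∫ u : ℝ, (Complex.exp (Complex.I * t * u) - 1) ∂(nuStable α m₁ m₂))

/-!
The multiplier is `exp (F t)` with `F t = iξx (e⁻ᵗ - 1) + Λ ξ - Λ (e⁻ᵗ ξ)`, where `Λ = log ψ_α` is
the sum of a linear drift and a jump part. As `F 0 = 0`, the limit is `F' 0`. Homogeneity of degree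
`-α` of `ν_α` makes the jump part positively homogeneous of degree `α`, so Euler's identity
evaluates its radial derivative without differentiating under the integral sign.
-/

open Filter Topology

/-- A measure `ν` on a real vector space is homogeneous of degree `r` if `ν (c • A) = c ^ r * ν A`
for all `c > 0`. The push-forward under `u ↦ c • u` evaluates `ν` on `c⁻¹ • A`; hence the exponent
`-r`. -/
def IsHomogeneousMeasure {E : Type*} [MeasurableSpace E] [SMul ℝ E] (ν : Measure E) (r : ℝ) :
    Prop :=
  ∀ c : ℝ, 0 < c → ν.map (c • ·) = ENNReal.ofReal (c ^ (-r)) • ν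

lemma map_withDensity_comp_of_measurableEmbedding {X Y : Type*} [MeasurableSpace X]
    [MeasurableSpace Y] {e : X → Y} (he : MeasurableEmbedding e) (μ : Measure X) (w : Y → ENNReal) :
    (μ.withDensity (w ∘ e)).map e = (μ.map e).withDensity w := by
  ext A hA
  rw [he.map_apply, withDensity_apply _ (he.measurable hA), withDensity_apply _ hA, he.restrict_map,
    he.lintegral_map]
  rfl

lemma isHomogeneousMeasure_addHaar {E : Type*} [NormedAddCommGroup E] [NormedSpace ℝ E]
    [FiniteDimensional ℝ E] [MeasurableSpace E] [BorelSpace E] (μ : Measure E)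
    [μ.IsAddHaarMeasure] : IsHomogeneousMeasure μ (Module.finrank ℝ E) := by
  intro c hc
  rw [Measure.map_addHaar_smul μ hc.ne', abs_of_pos (by positivity), Real.rpow_neg hc.le,
    Real.rpow_natCast]

namespace IsHomogeneousMeasure

variable {E : Type*} [MeasurableSpace E] [MulAction ℝ E] [MeasurableConstSMul ℝ E]
  {ν : Measure E} {r : ℝ}

lemma withDensity (hν : IsHomogeneousMeasure ν r) {w : E → ENNReal} {s : ℝ}
    (hw : ∀ c : ℝ, 0 < c → ∀ u, w (c • u) = ENNReal.ofReal (c ^ s) * w u) :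
    IsHomogeneousMeasure (ν.withDensity w) (r + s) := by
  intro c hc
  have hw_smul : w = ENNReal.ofReal (c ^ (-s)) • (w ∘ (c • ·)) := by
    ext u
    rw [Pi.smul_apply, Function.comp_apply, hw c hc, smul_eq_mul, ← mul_assoc,
      ← ENNReal.ofReal_mul (by positivity), ← Real.rpow_add hc, neg_add_cancel, Real.rpow_zero,
      ENNReal.ofReal_one, one_mul]
  calc (ν.withDensity w).map (c • ·)
      = ENNReal.ofReal (c ^ (-s)) • (ν.withDensity (w ∘ (c • ·))).map (c • ·) := by
        conv_lhs => rw [hw_smul, withDensity_smul' _ _ ENNReal.ofReal_ne_top, Measure.map_smul]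
    _ = ENNReal.ofReal (c ^ (-s)) • ENNReal.ofReal (c ^ (-r)) • ν.withDensity w := by
        rw [map_withDensity_comp_of_measurableEmbedding (measurableEmbedding_const_smul₀ hc.ne'),
          hν c hc, withDensity_smul_measure]
    _ = ENNReal.ofReal (c ^ (-(r + s))) • ν.withDensity w := by
        rw [smul_smul, ← ENNReal.ofReal_mul (by positivity), ← Real.rpow_add hc, neg_add_rev]

lemma integral_comp_smul {F : Type*} [NormedAddCommGroup F] [NormedSpace ℝ F]
    (hν : IsHomogeneousMeasure ν r) {c : ℝ} (hc : 0 < c) (f : E → F) :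
    ∫ u, f (c • u) ∂ν = c ^ (-r) • ∫ u, f u ∂ν := by
  rw [← (measurableEmbedding_const_smul₀ hc.ne').integral_map, hν c hc, integral_smul_measure,
    ENNReal.toReal_ofReal (by positivity)]

end IsHomogeneousMeasure

lemma isHomogeneousMeasure_nuStable (α m₁ m₂ : ℝ) :
    IsHomogeneousMeasure (nuStable α m₁ m₂) (-α) := by
  rw [show -α = Module.finrank ℝ ℝ + (-α - 1) by simp]
  refine (isHomogeneousMeasure_addHaar volume).withDensity fun c hc u => ?_
  rw [← ENNReal.ofReal_mul (by positivity)]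
  congr 1
  rcases lt_trichotomy u 0 with hu | rfl | hu
  · simp [hu, hu.not_gt, mul_neg_of_pos_of_neg hc hu, (mul_neg_of_pos_of_neg hc hu).not_gt, abs_mul,
      abs_of_pos hc, Real.mul_rpow hc.le, mul_left_comm]
  · simp
  · simp [hu, hc, Real.mul_rpow hc.le hu.le, mul_left_comm]

/-- The jump part `ξ ↦ ∫ (e^{iξu} - 1) ν(du)` of the Lévy exponent with Lévy measure `ν`, without
compensation of small jumps. It is meaningful when `∫ min(1, |u|) ν(du) < ∞`; where the integrand is
not integrable, its value is `0`. -/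
noncomputable def jumpExponent (ν : Measure ℝ) (ξ : ℝ) : ℂ :=
  ∫ u : ℝ, (Complex.exp (Complex.I * ξ * u) - 1) ∂ν

/-- The Lévy exponent (logarithm of the characteristic function) of the infinitely divisible law
with drift `b`, Lévy measure `ν` and no Gaussian part; jumps are not compensated. -/
noncomputable def levyExponent (b : ℝ) (ν : Measure ℝ) (ξ : ℝ) : ℂ :=
  Complex.I * ξ * b + jumpExponent ν ξ

lemma IsHomogeneousMeasure.jumpExponent_mul {ν : Measure ℝ} {r : ℝ}
    (hν : IsHomogeneousMeasure ν r) {c : ℝ} (hc : 0 < c) (ξ : ℝ) :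
    jumpExponent ν (c * ξ) = c ^ (-r) • jumpExponent ν ξ := by
  rw [jumpExponent, jumpExponent, ← hν.integral_comp_smul hc]
  congr! 4 with u
  push_cast [smul_eq_mul]
  ring

/-- Euler's identity for positively homogeneous functions, along the ray through `ξ`. -/
lemma hasDerivAt_exp_neg_smul_of_homogeneous {V F : Type*} [SMul ℝ V] [NormedAddCommGroup F]
    [NormedSpace ℝ F] {f : V → F} {r : ℝ} {ξ : V}
    (hf : ∀ c : ℝ, 0 < c → f (c • ξ) = c ^ r • f ξ) :
    HasDerivAt (fun t : ℝ => f (Real.exp (-t) • ξ)) (-(r • f ξ)) 0 := by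
  have hexp : HasDerivAt (fun t : ℝ => Real.exp (-t * r)) (-r) 0 := by
    simpa using ((hasDerivAt_neg (0 : ℝ)).mul_const r).exp
  simpa only [hf _ (Real.exp_pos _), Real.exp_mul, neg_smul] using hexp.smul_const (f ξ)

lemma IsHomogeneousMeasure.hasDerivAt_levyExponent_exp_neg_mul {ν : Measure ℝ} {r : ℝ}
    (hν : IsHomogeneousMeasure ν r) (b ξ : ℝ) :
    HasDerivAt (fun t : ℝ => levyExponent b ν (Real.exp (-t) * ξ))
      (-(Complex.I * ξ * b - r * jumpExponent ν ξ)) 0 := by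
  have hdrift : HasDerivAt (fun t : ℝ => Complex.I * (Real.exp (-t) * ξ : ℝ) * b)
      (-((1 : ℝ) • (Complex.I * ξ * b))) 0 :=
    hasDerivAt_exp_neg_smul_of_homogeneous (f := fun η : ℝ => Complex.I * η * b) fun c _ => by
      rw [Real.rpow_one, Complex.real_smul, smul_eq_mul, Complex.ofReal_mul]
      ring
  have hjump : HasDerivAt (fun t : ℝ => jumpExponent ν (Real.exp (-t) * ξ))
      (-(-r • jumpExponent ν ξ)) 0 :=
    hasDerivAt_exp_neg_smul_of_homogeneous (f := jumpExponent ν) fun _ hc =>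
      hν.jumpExponent_mul hc ξ
  refine (hdrift.add hjump).congr_deriv ?_
  rw [Complex.real_smul, Complex.real_smul]
  push_cast
  ring

lemma tendsto_inv_mul_cexp_sub_one {F : ℝ → ℂ} {F' : ℂ} (hF : HasDerivAt F F' 0) (hF0 : F 0 = 0) :
    Tendsto (fun t : ℝ => (1 / (t : ℂ)) * (Complex.exp (F t) - 1)) (𝓝[>] 0) (𝓝 F') := by
  have hexp : HasDerivAt (fun t => Complex.exp (F t)) F' 0 := by
    simpa [hF0] using hF.cexp
  simpa [hF0] using hexp.tendsto_slope_zero_right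

lemma tendsto_multiplier_slope_of_hasDerivAt {Λ : ℝ → ℂ} {L : ℂ} {ξ : ℝ}
    (hΛ : HasDerivAt (fun t : ℝ => Λ (Real.exp (-t) * ξ)) (-L) 0) (x : ℝ) :
    Tendsto (fun t : ℝ => (1 / (t : ℂ)) *
        (Complex.exp (Complex.I * ξ * x * ((Real.exp (-t) - 1 : ℝ) : ℂ)) *
          Complex.exp (Λ ξ) / Complex.exp (Λ (Real.exp (-t) * ξ)) - 1))
      (𝓝[>] 0) (𝓝 (-(Complex.I * ξ * x) + L)) := by
  have hexp : HasDerivAt (fun t : ℝ => ((Real.exp (-t) - 1 : ℝ) : ℂ)) (-1) 0 := by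
    simpa using ((hasDerivAt_neg (0 : ℝ)).exp.sub_const 1).ofReal_comp
  have hlog : HasDerivAt (fun t : ℝ => Complex.I * ξ * x * ((Real.exp (-t) - 1 : ℝ) : ℂ) + Λ ξ -
      Λ (Real.exp (-t) * ξ)) (-(Complex.I * ξ * x) + L) 0 := by
    simpa only [mul_neg_one, sub_neg_eq_add] using
      ((hexp.const_mul (Complex.I * ξ * x)).add_const (Λ ξ)).fun_sub hΛ
  simpa only [Complex.exp_add, Complex.exp_sub] using
    tendsto_inv_mul_cexp_sub_one hlog (by simp)

theorem stmt_10 (α m₁ m₂ β : ℝ) (hα : 0 < α) (hα1 : α < 1)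
    (hm₁ : 0 ≤ m₁) (hm₂ : 0 ≤ m₂) (hm : 0 < m₁ + m₂) (x ξ : ℝ) :
    Filter.Tendsto (fun t : ℝ =>
        (1 / (t : ℂ)) * (Complex.exp (Complex.I * ξ * x * ((Real.exp (-t) - 1 : ℝ) : ℂ)) *
          psi01 α m₁ m₂ β ξ / psi01 α m₁ m₂ β (Real.exp (-t) * ξ) - 1))
      (nhdsWithin 0 (Set.Ioi 0))
      (nhds (-(Complex.I * ξ * x) + Complex.I * ξ * (Gamma01 α m₁ m₂ β) +
        (α : ℂ) * ∫ u : ℝ, (Complex.exp (Complex.I * ξ * u) - 1) ∂(nuStable α m₁ m₂))) := by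
  have hΛ := (isHomogeneousMeasure_nuStable α m₁ m₂).hasDerivAt_levyExponent_exp_neg_mul
    (Gamma01 α m₁ m₂ β) ξ
  simpa only [psi01, levyExponent, jumpExponent, Complex.ofReal_neg, neg_mul, sub_neg_eq_add,
    ← add_assoc] using tendsto_multiplier_slope_of_hasDerivAt hΛ x
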